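/- Let Γ be a thick generalised hexagon, and let x1, x2, x3 be a round-up triple of points of Γ such that x1 and x2 are opposite. Then for all opposite lines L and M of Γ, if at least two of x1, x2, x3 belong to the distance-3 trace [L,M]_3, then all three of x1, x2, x3 belong to [L,M]_3. -/

import Mathlib

/-- An incidence structure of points and lines, each line being a set of points. -/
structure GenHexagon where
  Point : Type
  Line : Type
  pts : Line → Set Point

namespace GenHexagon

variable (Γ : GenHexagon)

/-- Adjacency of the bipartite incidence graph on the disjoint union of points and lines:
a point is adjacent to a line iff the point lies on the line. -/
def incAdj : Γ.Point ⊕ Γ.Line → Γ.Point ⊕ Γ.Line → Prop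
  | Sum.inl x, Sum.inr L => x ∈ Γ.pts L
  | Sum.inr L, Sum.inl x => x ∈ Γ.pts L
  | _, _ => False

/-- The bipartite incidence graph. -/
def incGraph : SimpleGraph (Γ.Point ⊕ Γ.Line) where
  Adj := Γ.incAdj
  symm := ⟨by rintro (x | L) (y | M) h <;> simp_all [incAdj]⟩
  loopless := ⟨by rintro (x | L) h <;> simp_all [incAdj]⟩

/-- `Γ` is a generalised hexagon: its incidence graph has diameter `6` and girth `12`. -/
def IsGenHexagon : Prop :=
  Γ.incGraph.ediam = 6 ∧ Γ.incGraph.egirth = 12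

/-- Two points are collinear if they are distinct and some line contains both. -/
def Collinear (x y : Γ.Point) : Prop :=
  x ≠ y ∧ ∃ L, x ∈ Γ.pts L ∧ y ∈ Γ.pts L

/-- Two points are special if they are distinct, non-collinear, and collinear
to a common point. -/
def Special (x y : Γ.Point) : Prop :=
  x ≠ y ∧ ¬ Γ.Collinear x y ∧ ∃ z, Γ.Collinear x z ∧ Γ.Collinear y z

/-- Two points are opposite if they are distinct, non-collinear and non-special. -/
def Opposite (x y : Γ.Point) : Prop :=
  x ≠ y ∧ ¬ Γ.Collinear x y ∧ ¬ Γ.Special x y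

/-- `Γ` has order `(s, t)`: every line contains exactly `s + 1` points and every
point lies on exactly `t + 1` lines. -/
def HasOrder (s t : ℕ) : Prop :=
  (∀ L, (Γ.pts L).encard = s + 1) ∧ (∀ x, {L | x ∈ Γ.pts L}.encard = t + 1)

/-- `Γ` is thick: every line contains at least `3` points and every point lies on
at least `3` lines. -/
def Thick : Prop :=
  (∀ L, 3 ≤ (Γ.pts L).encard) ∧ (∀ x, 3 ≤ {L | x ∈ Γ.pts L}.encard)

/-- A point is close to a line if it is collinear to exactly one point of that line. -/
def CloseTo (x : Γ.Point) (L : Γ.Line) : Prop :=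
  ∃! y, y ∈ Γ.pts L ∧ Γ.Collinear x y

/-- Two lines are opposite if they are disjoint and no point of one is collinear to
a point of the other. -/
def OppLines (L M : Γ.Line) : Prop :=
  (∀ x ∈ Γ.pts L, x ∉ Γ.pts M) ∧
  (∀ x ∈ Γ.pts L, ∀ y ∈ Γ.pts M, ¬ Γ.Collinear x y)

/-- The distance-3 trace `[L,M]₃` of two (opposite) lines: the set of points close to
both `L` and `M`. -/
def trace3 (L M : Γ.Line) : Set Γ.Point :=
  {x | Γ.CloseTo x L ∧ Γ.CloseTo x M}

/-- The distance-3 trace `[L,M]₃` is regular if `[N,M]₃ = [L,M]₃` for every line `N`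
opposite `M` such that `[N,M]₃` and `[L,M]₃` share at least two points. -/
def RegularTrace3 (L M : Γ.Line) : Prop :=
  ∀ N, Γ.OppLines N M → (Γ.trace3 N M ∩ Γ.trace3 L M).Nontrivial →
    Γ.trace3 N M = Γ.trace3 L M

/-- A hyperbolic line: a set `H` of pairwise special points, all collinear to a common
point `p`, such that for every point `q` opposite `p` to which at least two points of `H`
are special, the set of points special to `q` and collinear to `p` equals `H`. -/
def IsHyperbolicLine (H : Set Γ.Point) : Prop :=
  (∀ x ∈ H, ∀ y ∈ H, x ≠ y → Γ.Special x y) ∧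
  ∃ p, (∀ x ∈ H, Γ.Collinear x p) ∧
    ∀ q, Γ.Opposite q p → {x ∈ H | Γ.Special q x}.Nontrivial →
      {x | Γ.Special q x ∧ Γ.Collinear x p} = H

/-- A round-up triple: no point of `Γ` is opposite exactly one of `x₁, x₂, x₃`. -/
def RoundUpTriple (x₁ x₂ x₃ : Γ.Point) : Prop :=
  ∀ y : Γ.Point,
    ¬ ((Γ.Opposite y x₁ ∧ ¬ Γ.Opposite y x₂ ∧ ¬ Γ.Opposite y x₃) ∨
       (¬ Γ.Opposite y x₁ ∧ Γ.Opposite y x₂ ∧ ¬ Γ.Opposite y x₃) ∨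
       (¬ Γ.Opposite y x₁ ∧ ¬ Γ.Opposite y x₂ ∧ Γ.Opposite y x₃))

/-- A geometric line: a set `T` of points such that each point of `Γ` is either opposite
no member of `T`, or non-opposite to exactly one member of `T`. -/
def IsGeometricLine (T : Set Γ.Point) : Prop :=
  ∀ y : Γ.Point, (∀ x ∈ T, ¬ Γ.Opposite y x) ∨ (∃! x, x ∈ T ∧ ¬ Γ.Opposite y x)

end GenHexagon

/-! Non-opposite points are joined by a walk of length at most `4` in the incidence graph. If a
point `z` off a line `L` is non-opposite two points of `L`, extending the two walks to `L` would
give two distinct paths from `z` to `L` of total length at most `10`, against the girth, unless one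
of the walks already meets `L`; in that case `z` is at distance `3` from `L`, that is, close to `L`.
Now if two points of a round-up triple are close to `L`, then every point of `L` is non-opposite
both of them, hence also non-opposite the third. -/

lemma eq_of_adj_of_length_add_lt_egirth {V : Type*} {G : SimpleGraph V} {u v w t : V}
    {p : G.Walk u v} {q : G.Walk u w} (hp : t ∉ p.support) (hq : t ∉ q.support)
    (hvt : G.Adj v t) (hwt : G.Adj w t) (hlt : p.length + q.length + 2 < G.egirth) : v = w := by
  classical
  by_contra hvw
  have hp' := p.bypass_isPath.concat (fun ht => hp (p.support_bypass_subset_support ht)) hvt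
  have hq' := q.bypass_isPath.concat (fun ht => hq (q.support_bypass_subset_support ht)) hwt
  have hne : p.bypass.concat hvt ≠ q.bypass.concat hwt :=
    fun h => hvw (SimpleGraph.Walk.concat_inj h).1
  obtain ⟨_, -, -, c, hc, hle⟩ := hp'.exists_isCycle_length_le_add_of_ne hq' hne
  have hlen : c.length ≤ p.length + q.length + 2 := by
    have := p.length_bypass_le_length
    have := q.length_bypass_le_length
    simp only [SimpleGraph.Walk.length_concat] at hle
    omega
  exact (hlt.trans_le (SimpleGraph.egirth_le_length hc)).not_ge (by exact_mod_cast hlen)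

namespace GenHexagon

variable {Γ : GenHexagon} {x y z : Γ.Point} {L : Γ.Line}

lemma Collinear.symm (h : Γ.Collinear x y) : Γ.Collinear y x :=
  ⟨h.1.symm, h.2.imp fun _ hL => hL.symm⟩

lemma Opposite.symm (h : Γ.Opposite x y) : Γ.Opposite y x :=
  ⟨h.1.symm, fun hc => h.2.1 hc.symm, fun hs => h.2.2
    ⟨h.1, h.2.1, hs.2.2.imp fun _ hz => hz.symm⟩⟩

lemma adj_inl_inr (h : x ∈ Γ.pts L) : Γ.incGraph.Adj (.inl x) (.inr L) := h

lemma Collinear.exists_walk_length_eq_two (h : Γ.Collinear x y) :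
    ∃ p : Γ.incGraph.Walk (.inl x) (.inl y),
      p.length = 2 ∧ ∀ L, .inr L ∈ p.support → x ∈ Γ.pts L := by
  obtain ⟨-, K, hxK, hyK⟩ := h
  exact ⟨.cons (adj_inl_inr hxK) (.cons (adj_inl_inr hyK).symm .nil), rfl, by simpa⟩

lemma exists_walk_length_le_four_of_not_opposite (h : ¬ Γ.Opposite x y) :
    ∃ p : Γ.incGraph.Walk (.inl x) (.inl y), p.length ≤ 4 := by
  by_cases hxy : x = y
  · subst hxy
    exact ⟨.nil, by simp⟩
  by_cases hc : Γ.Collinear x y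
  · obtain ⟨p, hp, -⟩ := hc.exists_walk_length_eq_two
    exact ⟨p, by omega⟩
  obtain ⟨-, -, z, hxz, hyz⟩ : Γ.Special x y := not_not.mp fun hs => h ⟨hxy, hc, hs⟩
  obtain ⟨p, hp, -⟩ := hxz.exists_walk_length_eq_two
  obtain ⟨q, hq, -⟩ := hyz.symm.exists_walk_length_eq_two
  exact ⟨p.append q, by rw [SimpleGraph.Walk.length_append]; omega⟩

lemma exists_collinear_of_walk_length_le_three (hx : x ∉ Γ.pts L) :
    ∀ p : Γ.incGraph.Walk (.inl x) (.inr L), p.length ≤ 3 → ∃ y ∈ Γ.pts L, Γ.Collinear x y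
  | .cons (v := .inr _) h .nil, _ => absurd h hx
  | .cons (v := .inr K) hxK (.cons (v := .inl y) hyK (.cons hyL .nil)), _ =>
    ⟨y, hyL, fun hxy => hx (hxy ▸ hyL), K, hxK, hyK⟩

lemma eq_of_collinear_of_mem (hgirth : 6 < Γ.incGraph.egirth) (hx : x ∉ Γ.pts L)
    (hy : y ∈ Γ.pts L) (hz : z ∈ Γ.pts L) (hxy : Γ.Collinear x y) (hxz : Γ.Collinear x z) :
    y = z := by
  obtain ⟨p, hp, hpL⟩ := hxy.exists_walk_length_eq_two
  obtain ⟨q, hq, hqL⟩ := hxz.exists_walk_length_eq_two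
  refine Sum.inl.inj (eq_of_adj_of_length_add_lt_egirth (fun h => hx (hpL L h))
    (fun h => hx (hqL L h)) (adj_inl_inr hy) (adj_inl_inr hz) ?_)
  rw [hp, hq]
  exact hgirth

lemma inr_notMem_support_of_forall_not_collinear (hx : x ∉ Γ.pts L)
    (hL : ∀ w ∈ Γ.pts L, ¬ Γ.Collinear x w) (p : Γ.incGraph.Walk (.inl x) (.inl y))
    (hp : p.length ≤ 4) : .inr L ∉ p.support := by
  classical
  intro h
  have hlt := p.length_takeUntil_lt_length h Sum.inr_ne_inl
  obtain ⟨w, hw, hxw⟩ := exists_collinear_of_walk_length_le_three hx (p.takeUntil _ h) (by omega)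
  exact hL w hw hxw

lemma closeTo_of_not_opposite (hgirth : 10 < Γ.incGraph.egirth) (hx : x ∉ Γ.pts L) (hyz : y ≠ z)
    (hy : y ∈ Γ.pts L) (hz : z ∈ Γ.pts L) (hxy : ¬ Γ.Opposite x y) (hxz : ¬ Γ.Opposite x z) :
    Γ.CloseTo x L := by
  suffices h : ∃ w ∈ Γ.pts L, Γ.Collinear x w by
    obtain ⟨w, hw, hxw⟩ := h
    exact ⟨w, ⟨hw, hxw⟩, fun v hv =>
      eq_of_collinear_of_mem (hgirth.trans' (by norm_num)) hx hv.1 hw hv.2 hxw⟩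
  by_contra! hL
  obtain ⟨p, hp⟩ := exists_walk_length_le_four_of_not_opposite hxy
  obtain ⟨q, hq⟩ := exists_walk_length_le_four_of_not_opposite hxz
  refine hyz (Sum.inl.inj (eq_of_adj_of_length_add_lt_egirth
    (inr_notMem_support_of_forall_not_collinear hx hL p hp)
    (inr_notMem_support_of_forall_not_collinear hx hL q hq)
    (adj_inl_inr hy) (adj_inl_inr hz) (hgirth.trans_le' ?_)))
  exact_mod_cast (by omega : p.length + q.length + 2 ≤ 10)

lemma CloseTo.not_opposite (h : Γ.CloseTo x L) (hy : y ∈ Γ.pts L) : ¬ Γ.Opposite y x := by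
  obtain ⟨w, ⟨hw, hxw⟩, -⟩ := h
  rintro ⟨hyx, hnc, hns⟩
  have hyw : y ≠ w := fun h => hnc (h ▸ hxw.symm)
  exact hns ⟨hyx, hnc, w, ⟨hyw, L, hy, hw⟩, hxw⟩

namespace RoundUpTriple

lemma swap (h : Γ.RoundUpTriple x y z) : Γ.RoundUpTriple y x z := fun w => by
  have := h w
  tauto

lemma rotate (h : Γ.RoundUpTriple x y z) : Γ.RoundUpTriple y z x := fun w => by
  have := h w
  tauto

lemma opposite (h : Γ.RoundUpTriple x y z) (hxy : Γ.Opposite x y) : Γ.Opposite x z := by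
  have hxx : ¬ Γ.Opposite x x := fun hxx => hxx.1 rfl
  have := h x
  tauto

lemma not_opposite {w : Γ.Point} (h : Γ.RoundUpTriple x y z) (hx : ¬ Γ.Opposite w x)
    (hy : ¬ Γ.Opposite w y) : ¬ Γ.Opposite w z := by
  have := h w
  tauto

lemma closeTo (h : Γ.RoundUpTriple x y z) (hgirth : 10 < Γ.incGraph.egirth)
    (hL : (Γ.pts L).Nontrivial) (hz : z ∉ Γ.pts L) (hx : Γ.CloseTo x L) (hy : Γ.CloseTo y L) :
    Γ.CloseTo z L := by
  have not_opposite_of_mem (w) (hw : w ∈ Γ.pts L) : ¬ Γ.Opposite z w := fun hzw =>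
    h.not_opposite (hx.not_opposite hw) (hy.not_opposite hw) hzw.symm
  obtain ⟨a, ha, b, hb, hab⟩ := hL
  exact closeTo_of_not_opposite hgirth hz hab ha hb (not_opposite_of_mem a ha)
    (not_opposite_of_mem b hb)

end RoundUpTriple

lemma Thick.nontrivial_pts (h : Γ.Thick) (L : Γ.Line) : (Γ.pts L).Nontrivial :=
  Set.one_lt_encard_iff_nontrivial.mp ((h.1 L).trans_lt' (by norm_num))

lemma IsGenHexagon.ten_lt_egirth (h : Γ.IsGenHexagon) : 10 < Γ.incGraph.egirth := by
  rw [h.2]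
  norm_num

end GenHexagon

theorem roundUpTriple_opposite_general {Γ : GenHexagon} (hgirth : 10 < Γ.incGraph.egirth)
    {x₁ x₂ x₃ : Γ.Point} (hrut : Γ.RoundUpTriple x₁ x₂ x₃) (hopp : Γ.Opposite x₁ x₂)
    {L : Γ.Line} (hL : (Γ.pts L).Nontrivial)
    (h : (Γ.CloseTo x₁ L ∧ Γ.CloseTo x₂ L) ∨ (Γ.CloseTo x₁ L ∧ Γ.CloseTo x₃ L) ∨
      (Γ.CloseTo x₂ L ∧ Γ.CloseTo x₃ L)) :
    Γ.CloseTo x₁ L ∧ Γ.CloseTo x₂ L ∧ Γ.CloseTo x₃ L := by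
  rcases h with ⟨h₁, h₂⟩ | ⟨h₁, h₃⟩ | ⟨h₂, h₃⟩
  · have hx₃ : x₃ ∉ Γ.pts L := fun hx => h₁.not_opposite hx (hrut.opposite hopp).symm
    exact ⟨h₁, h₂, hrut.closeTo hgirth hL hx₃ h₁ h₂⟩
  · have hx₂ : x₂ ∉ Γ.pts L := fun hx => h₁.not_opposite hx hopp.symm
    exact ⟨h₁, hrut.swap.rotate.closeTo hgirth hL hx₂ h₁ h₃, h₃⟩
  · have hx₁ : x₁ ∉ Γ.pts L := fun hx => h₂.not_opposite hx hopp
    exact ⟨hrut.rotate.closeTo hgirth hL hx₁ h₂ h₃, h₂, h₃⟩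

/-- A round-up triple of points of a thick generalised hexagon with `x₁` and `x₂`
opposite is contained in every distance-3 trace containing at least two of its points. -/
theorem roundUpTriple_opposite (Γ : GenHexagon) (hΓ : Γ.IsGenHexagon) (hth : Γ.Thick)
    (x₁ x₂ x₃ : Γ.Point) (hrut : Γ.RoundUpTriple x₁ x₂ x₃)
    (hopp : Γ.Opposite x₁ x₂) :
    ∀ L M, Γ.OppLines L M →
      ((x₁ ∈ Γ.trace3 L M ∧ x₂ ∈ Γ.trace3 L M) ∨
       (x₁ ∈ Γ.trace3 L M ∧ x₃ ∈ Γ.trace3 L M) ∨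
       (x₂ ∈ Γ.trace3 L M ∧ x₃ ∈ Γ.trace3 L M)) →
      x₁ ∈ Γ.trace3 L M ∧ x₂ ∈ Γ.trace3 L M ∧ x₃ ∈ Γ.trace3 L M := by
  rintro L M - h
  have hclose (K) :=
    roundUpTriple_opposite_general hΓ.ten_lt_egirth hrut hopp (hth.nontrivial_pts K)
  grind [GenHexagon.trace3]
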